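/- Suppose the Assumptions hold. Then exactly one of the following four options holds for the placement of t₁ and w₁: (a) t₁ ∈ (x(a),x(d₁))×{y(a)} and w₁ = d₁; (b) t₁ ∈ {x(a)}×(y(d₁),y(a)) and w₁ = d₁; (c) t₁ ∈ {x(a)}×(y(a),∞) and w₁ ∈ (x(a),x(d₁)]×{y(a)}; (d) t₁ ∈ (−∞,x(a))×{y(a)} and w₁ ∈ {x(a)}×[y(d₁),y(a)). Moreover the analogous statement holds for t₂ and w₂ with d₂ in place of d₁. -/

import Mathlib

noncomputable section
open Classical

/-- The L1 (Manhattan) metric on ℝ². -/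
def rho (u v : ℝ × ℝ) : ℝ := |u.1 - v.1| + |u.2 - v.2|

/-- `z` is between `u` and `v` (w.r.t. the L1 metric): the three points are
pairwise distinct and `ρ(u,v) = ρ(u,z) + ρ(z,v)`. -/
def MBtw (u z v : ℝ × ℝ) : Prop :=
  u ≠ z ∧ z ≠ v ∧ u ≠ v ∧ rho u v = rho u z + rho z v

/-- The line of `X` induced by distinct points `u, v`. -/
def lineThrough (X : Finset (ℝ × ℝ)) (u v : ℝ × ℝ) : Finset (ℝ × ℝ) :=
  X.filter fun z => z = u ∨ z = v ∨ MBtw u z v ∨ MBtw z u v ∨ MBtw u v z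

/-- `X` is non-collinear: no line induced by two distinct points of `X` equals `X`. -/
def NonCollinear (X : Finset (ℝ × ℝ)) : Prop :=
  ∀ u ∈ X, ∀ v ∈ X, u ≠ v → lineThrough X u v ≠ X

/-- `{p,q}` is an increasing pair. -/
def IncPair (p q : ℝ × ℝ) : Prop := 0 < (q.1 - p.1) * (q.2 - p.2)

/-- `{p,q}` is a decreasing pair. -/
def DecPair (p q : ℝ × ℝ) : Prop := (q.1 - p.1) * (q.2 - p.2) < 0

/-- The partial order `≤_I`. -/
def leI (c d : ℝ × ℝ) : Prop := c.1 ≤ d.1 ∧ c.2 ≤ d.2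

/-- `c <_I d`. -/
def ltI (c d : ℝ × ℝ) : Prop := leI c d ∧ c ≠ d

/-- The partial order `≤_D`. -/
def leD (c d : ℝ × ℝ) : Prop := c.1 ≤ d.1 ∧ d.2 ≤ c.2

/-- `c <_D d`. -/
def ltD (c d : ℝ × ℝ) : Prop := leD c d ∧ c ≠ d

/-- `(p,q)` is a blue arrow of `X`. -/
def BlueArrow (X : Finset (ℝ × ℝ)) (p q : ℝ × ℝ) : Prop :=
  p ∈ X ∧ q ∈ X ∧ IncPair p q ∧ ltI p q ∧
  ∀ a b, a ∈ X → b ∈ X → IncPair a b → ltI a b →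
    lineThrough X a b = lineThrough X p q → (ltI q b ∨ (q = b ∧ leI a p))

/-- `(p,q)` is a red arrow of `X`. -/
def RedArrow (X : Finset (ℝ × ℝ)) (p q : ℝ × ℝ) : Prop :=
  p ∈ X ∧ q ∈ X ∧ DecPair p q ∧ ltD p q ∧
  ∀ a b, a ∈ X → b ∈ X → DecPair a b → ltD a b →
    lineThrough X a b = lineThrough X p q → (ltD q b ∨ (q = b ∧ leD a p))

/-- An arrow is a blue or a red arrow. -/
def Arrow (X : Finset (ℝ × ℝ)) (p q : ℝ × ℝ) : Prop :=
  BlueArrow X p q ∨ RedArrow X p q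

/-- `a` is not an endpoint of any arrow of `X`. -/
def NotEndpoint (X : Finset (ℝ × ℝ)) (a : ℝ × ℝ) : Prop :=
  ∀ p q, Arrow X p q → a ≠ p ∧ a ≠ q

/-- Option (a): `t ∈ (x(a),x(d))×{y(a)}` and `w = d`. -/
def PlacementA (a d t w : ℝ × ℝ) : Prop :=
  (a.1 < t.1 ∧ t.1 < d.1 ∧ t.2 = a.2) ∧ w = d

/-- Option (b): `t ∈ {x(a)}×(y(d),y(a))` and `w = d`. -/
def PlacementB (a d t w : ℝ × ℝ) : Prop :=
  (t.1 = a.1 ∧ d.2 < t.2 ∧ t.2 < a.2) ∧ w = d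

/-- Option (c): `t ∈ {x(a)}×(y(a),∞)` and `w ∈ (x(a),x(d)]×{y(a)}`. -/
def PlacementC (a d t w : ℝ × ℝ) : Prop :=
  (t.1 = a.1 ∧ a.2 < t.2) ∧ (a.1 < w.1 ∧ w.1 ≤ d.1 ∧ w.2 = a.2)

/-- Option (d): `t ∈ (−∞,x(a))×{y(a)}` and `w ∈ {x(a)}×[y(d),y(a))`. -/
def PlacementD (a d t w : ℝ × ℝ) : Prop :=
  (t.2 = a.2 ∧ t.1 < a.1) ∧ (w.1 = a.1 ∧ d.2 ≤ w.2 ∧ w.2 < a.2)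

/-- The four placement options of Lemma 2 (placement). -/
def Placement (a d t w : ℝ × ℝ) : Fin 4 → Prop
  | 0 => PlacementA a d t w
  | 1 => PlacementB a d t w
  | 2 => PlacementC a d t w
  | 3 => PlacementD a d t w

/-!
Betweenness in the Manhattan metric is membership in a coordinate box, so the line through a
decreasing pair `{u, v}` consists of the points that are `≤_D`-comparable to both `u` and `v`.
Let `(t, w)` be the red arrow of `⟨a, d⟩`. Comparing it with the decreasing pair `(a, d)` gives
either `w = d` and `a ≤_D t`, or `w <_D d`. In both cases one of `t`, `w` lies in the box spanned
by `a` and `d`; the box contains no point of `X` off its two sides through `a` except `d`, so this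
point lies on one of these sides. If it is `w`, then `t ≤_D a`, and since `t` is not in the second
quadrant of `a`, it lies on the axis ray from `a` opposite to the other side.
-/

open Set

lemma abs_sub_eq_add_iff_mem_uIcc {u z v : ℝ} :
    |u - v| = |u - z| + |z - v| ↔ z ∈ uIcc u v := by
  rw [← segment_eq_uIcc, mem_segment_iff_wbtw, ← dist_add_dist_eq_iff, eq_comm]
  simp only [Real.dist_eq]

lemma rho_eq_add_iff_mem_uIcc {u z v : ℝ × ℝ} :
    rho u v = rho u z + rho z v ↔ z.1 ∈ uIcc u.1 v.1 ∧ z.2 ∈ uIcc u.2 v.2 := by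
  simp only [← abs_sub_eq_add_iff_mem_uIcc, rho]
  have hx := abs_sub_le u.1 z.1 v.1
  have hy := abs_sub_le u.2 z.2 v.2
  constructor
  · intro h
    constructor <;> linarith
  · rintro ⟨hx', hy'⟩
    linarith

lemma decPair_and_ltD_iff {p q : ℝ × ℝ} :
    DecPair p q ∧ ltD p q ↔ p.1 < q.1 ∧ q.2 < p.2 := by
  constructor
  · rintro ⟨hdec, ⟨hx, hy⟩, -⟩
    have hne := mul_ne_zero_iff.mp hdec.ne
    exact ⟨hx.lt_of_ne (sub_ne_zero.mp hne.1).symm, hy.lt_of_ne (sub_ne_zero.mp hne.2)⟩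
  · rintro ⟨hx, hy⟩
    exact ⟨mul_neg_of_pos_of_neg (sub_pos.mpr hx) (sub_neg.mpr hy),
      ⟨hx.le, hy.le⟩, ne_of_apply_ne Prod.fst hx.ne⟩

section Line

variable {X : Finset (ℝ × ℝ)} {u v z : ℝ × ℝ}

lemma left_mem_lineThrough (hu : u ∈ X) : u ∈ lineThrough X u v := by
  simp [lineThrough, hu]

lemma right_mem_lineThrough (hv : v ∈ X) : v ∈ lineThrough X u v := by
  simp [lineThrough, hv]

lemma mem_lineThrough_iff_rho (huv : u ≠ v) :
    z ∈ lineThrough X u v ↔ z ∈ X ∧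
      (rho u v = rho u z + rho z v ∨ rho z v = rho z u + rho u v ∨
        rho u z = rho u v + rho v z) := by
  have hself (p : ℝ × ℝ) : rho p p = 0 := by simp [rho]
  rw [lineThrough, Finset.mem_filter]
  refine and_congr_right fun _ => ?_
  obtain rfl | hzu := eq_or_ne z u
  · simp [hself]
  obtain rfl | hzv := eq_or_ne z v
  · simp [hself]
  simp only [MBtw, ne_eq, huv, hzu, hzv, hzu.symm, hzv.symm, not_false_eq_true, true_and,
    false_or]

lemma mem_lineThrough_iff_leD (huv : u.1 < v.1 ∧ v.2 < u.2) :
    z ∈ lineThrough X u v ↔ z ∈ X ∧ (leD z u ∨ leD u z) ∧ (leD z v ∨ leD v z) := by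
  obtain ⟨hx, hy⟩ := huv
  have hbtw : rho u v = rho u z + rho z v ↔ leD u z ∧ leD z v := by
    rw [rho_eq_add_iff_mem_uIcc, uIcc_of_lt hx, uIcc_of_gt hy]
    simp only [mem_Icc, leD]
    tauto
  have hleft : rho z v = rho z u + rho u v ↔ leD z u := by
    rw [rho_eq_add_iff_mem_uIcc]
    simp only [mem_uIcc, leD]
    grind
  have hright : rho u z = rho u v + rho v z ↔ leD v z := by
    rw [rho_eq_add_iff_mem_uIcc]
    simp only [mem_uIcc, leD]
    grind
  rw [mem_lineThrough_iff_rho (ne_of_apply_ne Prod.fst hx.ne), hbtw, hleft, hright]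
  unfold leD
  grind

end Line

/-- The box `(x(a),x(d)] × [y(d),y(a))`: the rectangle with opposite corners `a` and `d`, for `d`
in the fourth quadrant of `a`, without its two sides through `a`. -/
def halfOpenBox (a d : ℝ × ℝ) : Set (ℝ × ℝ) := Ioc a.1 d.1 ×ˢ Ico d.2 a.2

section EmptyBox

variable {X : Finset (ℝ × ℝ)} {a d : ℝ × ℝ}

lemma inter_halfOpenBox_eq_singleton_of_row (hdX : d ∈ X) (hd : a.1 < d.1 ∧ d.2 < a.2)
    (hstrip : ∀ z ∈ X, ¬(a.1 < z.1 ∧ d.2 < z.2 ∧ z.2 < a.2))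
    (hseg : ∀ z ∈ X, ¬(a.1 < z.1 ∧ z.1 < d.1 ∧ z.2 = d.2)) :
    (X : Set (ℝ × ℝ)) ∩ halfOpenBox a d = {d} := by
  refine eq_singleton_iff_unique_mem.mpr
    ⟨⟨hdX, ⟨hd.1, le_rfl⟩, le_rfl, hd.2⟩, ?_⟩
  rintro z ⟨hz, ⟨haz, hzd⟩, hdz, hza⟩
  have hy : z.2 = d.2 := hdz.eq_or_lt'.resolve_right fun h => hstrip z hz ⟨haz, h, hza⟩
  exact Prod.ext (hzd.eq_or_lt.resolve_right fun h => hseg z hz ⟨haz, h, hy⟩) hy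

lemma inter_halfOpenBox_eq_singleton_of_column (hdX : d ∈ X) (hd : a.1 < d.1 ∧ d.2 < a.2)
    (hstrip : ∀ z ∈ X, ¬(a.1 < z.1 ∧ z.1 < d.1 ∧ z.2 < a.2))
    (hseg : ∀ z ∈ X, ¬(z.1 = d.1 ∧ d.2 < z.2 ∧ z.2 < a.2)) :
    (X : Set (ℝ × ℝ)) ∩ halfOpenBox a d = {d} := by
  refine eq_singleton_iff_unique_mem.mpr
    ⟨⟨hdX, ⟨hd.1, le_rfl⟩, le_rfl, hd.2⟩, ?_⟩
  rintro z ⟨hz, ⟨haz, hzd⟩, hdz, hza⟩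
  have hx : z.1 = d.1 := hzd.eq_or_lt.resolve_right fun h => hstrip z hz ⟨haz, h, hza⟩
  exact Prod.ext hx (hdz.eq_or_lt'.resolve_right fun h => hseg z hz ⟨hx, h, hza⟩)

lemma fst_eq_or_snd_eq_of_inter_halfOpenBox
    (hbox : (X : Set (ℝ × ℝ)) ∩ halfOpenBox a d = {d}) {z : ℝ × ℝ} (hz : z ∈ X)
    (haz : leD a z) (hzd : ltD z d) : z.1 = a.1 ∨ z.2 = a.2 := by
  by_contra! h
  have hmem : z ∈ (X : Set (ℝ × ℝ)) ∩ halfOpenBox a d :=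
    ⟨hz, ⟨haz.1.lt_of_ne' h.1, hzd.1.1⟩, hzd.1.2, haz.2.lt_of_ne h.2⟩
  rw [hbox] at hmem
  exact hzd.2 hmem

end EmptyBox

section Placement

variable {X : Finset (ℝ × ℝ)} {a d t w : ℝ × ℝ}

lemma RedArrow.lt (h : RedArrow X t w) : t.1 < w.1 ∧ w.2 < t.2 :=
  decPair_and_ltD_iff.mp ⟨h.2.2.1, h.2.2.2.1⟩

lemma RedArrow.ltD_or_eq_and_leD (h : RedArrow X t w) (haX : a ∈ X) (hdX : d ∈ X)
    (had : a.1 < d.1 ∧ d.2 < a.2) (hl : lineThrough X t w = lineThrough X a d) :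
    ltD w d ∨ w = d ∧ leD a t := by
  obtain ⟨hdec, hlt⟩ := decPair_and_ltD_iff.mpr had
  exact h.2.2.2.2 a d haX hdX hdec hlt hl.symm

lemma placementA_or_placementB (hbox : (X : Set (ℝ × ℝ)) ∩ halfOpenBox a d = {d})
    (htX : t ∈ X) (hat : ltD a t) (htd : t.1 < d.1 ∧ d.2 < t.2) :
    PlacementA a d t d ∨ PlacementB a d t d := by
  obtain ⟨⟨hx, hy⟩, hne⟩ := hat
  obtain ht | ht := fst_eq_or_snd_eq_of_inter_halfOpenBox hbox htX ⟨hx, hy⟩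
    (decPair_and_ltD_iff.mpr htd).2
  · have hy' : t.2 < a.2 := hy.lt_of_ne fun h => hne (Prod.ext ht.symm h.symm)
    exact .inr ⟨⟨ht, htd.2, hy'⟩, rfl⟩
  · have hx' : a.1 < t.1 := hx.lt_of_ne fun h => hne (Prod.ext h ht.symm)
    exact .inl ⟨⟨hx', htd.1, ht⟩, rfl⟩

lemma placementC_or_placementD (hbox : (X : Set (ℝ × ℝ)) ∩ halfOpenBox a d = {d})
    (hQ2 : ¬(t.1 < a.1 ∧ a.2 < t.2)) (hwX : w ∈ X) (haw : ltD a w) (hwd : ltD w d)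
    (htw : t.1 < w.1 ∧ w.2 < t.2) (hta : leD t a ∨ leD a t) :
    PlacementC a d t w ∨ PlacementD a d t w := by
  obtain ⟨⟨hx, hy⟩, hne⟩ := haw
  obtain hw | hw := fst_eq_or_snd_eq_of_inter_halfOpenBox hbox hwX ⟨hx, hy⟩ hwd
  · have hw' : w.2 < a.2 := hy.lt_of_ne fun h => hne (Prod.ext hw.symm h.symm)
    have ht : t.1 < a.1 := hw ▸ htw.1
    have hta : leD t a := hta.resolve_right fun h => ht.not_ge h.1
    have ht' : t.2 = a.2 := hta.2.eq_or_lt'.resolve_right fun h => hQ2 ⟨ht, h⟩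
    exact .inr ⟨⟨ht', ht⟩, hw, hwd.1.2, hw'⟩
  · have hw' : a.1 < w.1 := hx.lt_of_ne fun h => hne (Prod.ext h hw.symm)
    have ht : a.2 < t.2 := hw ▸ htw.2
    have hta : leD t a := hta.resolve_right fun h => ht.not_ge h.2
    have ht' : t.1 = a.1 := hta.1.eq_or_lt.resolve_right fun h => hQ2 ⟨h, ht⟩
    exact .inl ⟨⟨ht', ht⟩, hw', hwd.1.1, hw⟩

-- The four options place `t` on the four different open axis rays from `a`.
lemma placement_unique {i j : Fin 4} (hi : Placement a d t w i) (hj : Placement a d t w j) :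
    i = j := by
  fin_cases i <;> fin_cases j <;>
    simp only [Placement, PlacementA, PlacementB, PlacementC, PlacementD] at hi hj ⊢ <;> grind

lemma exists_placement (haX : a ∈ X) (hQ2 : ¬(t.1 < a.1 ∧ a.2 < t.2))
    (hbox : (X : Set (ℝ × ℝ)) ∩ halfOpenBox a d = {d}) (h : RedArrow X t w)
    (hne : a ≠ t ∧ a ≠ w) (hl : lineThrough X t w = lineThrough X a d) :
    ∃ i, Placement a d t w i := by
  obtain ⟨hdX, ⟨hx, -⟩, -, hy⟩ : d ∈ (X : Set (ℝ × ℝ)) ∩ halfOpenBox a d := hbox ▸ rfl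
  have had : a.1 < d.1 ∧ d.2 < a.2 := ⟨hx, hy⟩
  have ht := (mem_lineThrough_iff_leD had).mp (hl ▸ left_mem_lineThrough h.1)
  have hw := (mem_lineThrough_iff_leD had).mp (hl ▸ right_mem_lineThrough h.2.1)
  obtain hwd | ⟨rfl, hat⟩ := h.ltD_or_eq_and_leD haX hdX had hl
  · have hwa : ¬leD w a := fun hwa =>
      hQ2 ⟨h.lt.1.trans_le hwa.1, hwa.2.trans_lt h.lt.2⟩
    have haw : ltD a w := ⟨hw.2.1.resolve_left hwa, hne.2⟩
    obtain hC | hD := placementC_or_placementD hbox hQ2 h.2.1 haw hwd h.lt ht.2.1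
    · exact ⟨2, hC⟩
    · exact ⟨3, hD⟩
  · obtain hA | hB := placementA_or_placementB hbox h.1 ⟨hat, hne.1⟩ h.lt
    · exact ⟨0, hA⟩
    · exact ⟨1, hB⟩

theorem placement_options_general (haX : a ∈ X) (hQ2 : ¬(t.1 < a.1 ∧ a.2 < t.2))
    (hbox : (X : Set (ℝ × ℝ)) ∩ halfOpenBox a d = {d}) (h : RedArrow X t w)
    (hne : a ≠ t ∧ a ≠ w) (hl : lineThrough X t w = lineThrough X a d) :
    ∃! i, Placement a d t w i := by
  obtain ⟨i, hi⟩ := exists_placement haX hQ2 hbox h hne hl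
  exact ⟨i, hi, fun _ hj => placement_unique hj hi⟩

end Placement

/-- Under the Assumptions, exactly one of the four placement options holds for
`(t₁,w₁)` (w.r.t. `d₁`), and exactly one holds for `(t₂,w₂)` (w.r.t. `d₂`). -/
theorem placement_options (X : Finset (ℝ × ℝ)) (a d₁ d₂ t₁ w₁ t₂ w₂ : ℝ × ℝ)
    (hnc : NonCollinear X) (haX : a ∈ X) (hiso : NotEndpoint X a)
    (hQ2 : ∀ z ∈ X, ¬(z.1 < a.1 ∧ a.2 < z.2))
    (hQ4 : ∃ z ∈ X, a.1 < z.1 ∧ z.2 < a.2)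
    (hd1X : d₁ ∈ X) (hd1 : a.1 < d₁.1 ∧ d₁.2 < a.2)
    (hd1strip : ∀ z ∈ X, ¬(a.1 < z.1 ∧ d₁.2 < z.2 ∧ z.2 < a.2))
    (hd1seg : ∀ z ∈ X, ¬(a.1 < z.1 ∧ z.1 < d₁.1 ∧ z.2 = d₁.2))
    (hd2X : d₂ ∈ X) (hd2 : a.1 < d₂.1 ∧ d₂.2 < a.2)
    (hd2strip : ∀ z ∈ X, ¬(a.1 < z.1 ∧ z.1 < d₂.1 ∧ z.2 < a.2))
    (hd2seg : ∀ z ∈ X, ¬(z.1 = d₂.1 ∧ d₂.2 < z.2 ∧ z.2 < a.2))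
    (ht1 : RedArrow X t₁ w₁) (hl1 : lineThrough X t₁ w₁ = lineThrough X a d₁)
    (ht2 : RedArrow X t₂ w₂) (hl2 : lineThrough X t₂ w₂ = lineThrough X a d₂) :
    (∃! i : Fin 4, Placement a d₁ t₁ w₁ i) ∧ (∃! i : Fin 4, Placement a d₂ t₂ w₂ i) := by
  have hrow := inter_halfOpenBox_eq_singleton_of_row hd1X hd1 hd1strip hd1seg
  have hcolumn := inter_halfOpenBox_eq_singleton_of_column hd2X hd2 hd2strip hd2seg
  exact ⟨placement_options_general haX (hQ2 t₁ ht1.1) hrow ht1 (hiso t₁ w₁ (.inr ht1)) hl1,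
    placement_options_general haX (hQ2 t₂ ht2.1) hcolumn ht2 (hiso t₂ w₂ (.inr ht2)) hl2⟩
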